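/- Let δ > 0, let 𝒵 ⊆ ℝ be a measurable set of finite measure Z, and let η : ℝ → ℂ be a measurable function with |η_μ| = 1 for all μ ∈ 𝒵. Define H(α) = ∫_𝒵 η_μ e(−αμ) dμ and K₁(α) = (sin(πδα)/(πδα))². Then ∫_{-∞}^{∞} |H(α)|² K₁(α) dα ≤ 2Z. -/

import Mathlib

open Real MeasureTheory Set

open scoped FourierTransform SchwartzMap ContDiff in
lemma fourier_ae_eq (f : ℝ → ℂ) (hf1 : Integrable f) (hf2 : MemLp f 2) :
    ((𝓕 (hf2.toLp f) : Lp (α := ℝ) ℂ 2) : ℝ → ℂ) =ᵐ[volume] 𝓕 f := by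
  have hcont : Continuous (𝓕 f) :=
    VectorFourier.fourierIntegral_continuous Real.continuous_fourierChar
      (by fun_prop) hf1
  apply ae_eq_of_integral_contDiff_smul_eq
  · exact (Lp.memLp _).locallyIntegrable (by norm_num)
  · exact hcont.locallyIntegrable
  · intro g g_smooth g_cpt
    have hg₁ : HasCompactSupport (Complex.ofRealCLM ∘ g) := g_cpt.comp_left rfl
    have hg₂ : ContDiff ℝ ∞ (Complex.ofRealCLM ∘ g) := by fun_prop
    set G : 𝓢(ℝ, ℂ) := hg₁.toSchwartzMap hg₂ with hG
    have hGg : ∀ x, G x = (g x : ℂ) := fun x => by simp [hG]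
    have h1 := congrArg (fun T : 𝓢'(ℝ, ℂ) => T G)
      (Lp.fourier_toTemperedDistribution_eq (hf2.toLp f))
    simp only [TemperedDistribution.fourier_apply, Lp.toTemperedDistribution_apply] at h1
    have h2 : ∫ x, (𝓕 G) x • (hf2.toLp f) x = ∫ x, (𝓕 G) x • f x := by
      apply integral_congr_ae
      filter_upwards [hf2.coeFn_toLp] with x hx
      rw [hx]
    have h3 : ∫ x, (𝓕 (G : ℝ → ℂ)) x • f x = ∫ x, G x • 𝓕 f x := by
      have h4 := VectorFourier.integral_fourierIntegral_smul_eq_flip (μ := volume) (ν := volume)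
        (L := innerₗ ℝ) (f := (G : ℝ → ℂ)) (g := f)
        Real.continuous_fourierChar continuous_inner G.integrable hf1
      rw [flip_innerₗ] at h4
      exact h4
    rw [h2, SchwartzMap.fourier_coe, h3] at h1
    simp only [hGg] at h1
    simpa using h1.symm

open scoped FourierTransform in
lemma plancherel_L1L2 (f : ℝ → ℂ) (hf1 : Integrable f) (hf2 : MemLp f 2) :
    Integrable (fun x => ‖𝓕 f x‖ ^ 2) ∧ ∫ x, ‖𝓕 f x‖ ^ 2 = ∫ x, ‖f x‖ ^ 2 := by
  have h := fourier_ae_eq f hf1 hf2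
  have hm : MemLp (𝓕 f) 2 := (memLp_congr_ae h).1 (Lp.memLp _)
  have key : ∀ {u : ℝ → ℂ} (hu : MemLp u 2), ∫ x, ‖u x‖ ^ 2 = ‖hu.toLp u‖ ^ 2 := by
    intro u hu
    have := L2.inner_def (𝕜 := ℂ) (hu.toLp u) (hu.toLp u)
    rw [inner_self_eq_norm_sq_to_K] at this
    have h2 : ∫ a, inner ℂ ((hu.toLp u) a) ((hu.toLp u) a) = ∫ a, ((‖u a‖ ^ 2 : ℝ) : ℂ) := by
      apply integral_congr_ae
      filter_upwards [hu.coeFn_toLp] with x hx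
      rw [hx, inner_self_eq_norm_sq_to_K]; simp
    rw [h2, integral_complex_ofReal] at this
    exact Complex.ofReal_injective (by rw [← this]; simp)
  refine ⟨hm.integrable_norm_pow (by norm_num), ?_⟩
  rw [key hm, key hf2, ← Lp.norm_fourier_eq (hf2.toLp f)]
  congr 2
  apply Lp.ext
  exact hm.coeFn_toLp.trans h.symm

theorem stmt_4 (δ : ℝ) (hδ : 0 < δ)
    (𝒵 : Set ℝ) (h𝒵 : MeasurableSet 𝒵) (hfin : volume 𝒵 < ⊤)
    (η : ℝ → ℂ) (hη : Measurable η) (hη1 : ∀ μ ∈ 𝒵, ‖η μ‖ = 1)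
    (H : ℝ → ℂ)
    (hH : ∀ α : ℝ, H α = ∫ μ in 𝒵, η μ * Complex.exp (-(2 * π * Complex.I * α * μ)))
    (K₁ : ℝ → ℝ) (hK₁0 : K₁ 0 = 1)
    (hK₁ : ∀ α : ℝ, α ≠ 0 → K₁ α = (Real.sin (π * δ * α) / (π * δ * α)) ^ 2) :
    (∫ α : ℝ, ‖H α‖ ^ 2 * K₁ α) ≤ 2 * (volume 𝒵).toReal := by
  set f : ℝ → ℂ := 𝒵.indicator η with hf
  have hbound : ∀ x, ‖f x‖ = 𝒵.indicator (fun _ => (1 : ℝ)) x := by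
    intro x
    by_cases hx : x ∈ 𝒵 <;> simp [hf, hx, hη1]
  have hfm : AEStronglyMeasurable f volume := (hη.indicator h𝒵).aestronglyMeasurable
  have hi1 : ∀ p, MemLp (𝒵.indicator (fun _ => (1 : ℝ))) p volume := fun p =>
    memLp_indicator_const p h𝒵 1 (Or.inr hfin.ne)
  have hfp : ∀ p, MemLp f p volume := fun p =>
    (hi1 p).mono hfm (Filter.Eventually.of_forall fun x => by
      rw [hbound x]; exact le_abs_self _)
  have hf1 : Integrable f := memLp_one_iff_integrable.1 (hfp 1)
  obtain ⟨hint, heq⟩ := plancherel_L1L2 f hf1 (hfp 2)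
  have hHf : ∀ α, H α = FourierTransform.fourier f α := by
    intro α
    rw [hH, Real.fourier_real_eq_integral_exp_smul, ← integral_indicator h𝒵]
    congr 1
    ext x
    by_cases hx : x ∈ 𝒵
    · simp only [hf, hx, indicator_of_mem, smul_eq_mul]
      rw [mul_comm]
      congr 2
      push_cast
      ring
    · simp [hf, hx]
  have hZ : ∫ x, ‖f x‖ ^ 2 = (volume 𝒵).toReal := by
    have : (fun x => ‖f x‖ ^ 2) = 𝒵.indicator (fun _ => (1 : ℝ)) := by
      ext x
      rw [hbound]
      by_cases hx : x ∈ 𝒵 <;> simp [hx]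
    rw [this, integral_indicator h𝒵]
    simp [Measure.real]
  have hK : ∀ α, 0 ≤ K₁ α ∧ K₁ α ≤ 1 := by
    intro α
    by_cases hα : α = 0
    · subst hα; simp [hK₁0]
    · rw [hK₁ α hα]
      refine ⟨sq_nonneg _, ?_⟩
      rw [sq_le_one_iff_abs_le_one, abs_div]
      exact div_le_one_of_le₀ Real.abs_sin_le_abs (abs_nonneg _)
  have hle : (∫ α : ℝ, ‖H α‖ ^ 2 * K₁ α) ≤ ∫ α, ‖FourierTransform.fourier f α‖ ^ 2 := by
    apply integral_mono_of_nonneg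
    · exact Filter.Eventually.of_forall fun α => mul_nonneg (sq_nonneg _) (hK α).1
    · exact hint
    · exact Filter.Eventually.of_forall fun α => by
        simp only [hHf]
        exact mul_le_of_le_one_right (sq_nonneg _) (hK α).2
  have h0 : 0 ≤ (volume 𝒵).toReal := ENNReal.toReal_nonneg
  linarith
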